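/- arXiv:math/0512024 — 4 statements merged into one kernel-verified Lean document; each statement's English description precedes it below -/
import Mathlib

section
/- For any monoids A, B and C, the direct product (A ≀ B) × C embeds in the wreath product A ≀ (B × C). Explicitly, the map ψ : (A ≀ B) × C → A ≀ (B × C) given by ((f,b),c)ψ = (fα, (b,c)), where fα : B × C → A is defined by (b₀,c₀)(fα) = b₀f, is an injective monoid homomorphism. -/
/-- The wreath product `S ≀ T` of monoids: underlying set `S^T × T = (T → S) × T`, with
multiplication `(f, a)(g, b) = (f · ᵃg, ab)` where `t (ᵃg) = g (t * a)`
(functions are applied on the right, and `T` acts on `S^T` by `t₂(^{t₁}f) = (t₂t₁)f`). -/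
def WreathProduct (S T : Type*) [Monoid S] [Monoid T] : Type _ := (T → S) × T

instance WreathProduct.instMonoid (S T : Type*) [Monoid S] [Monoid T] :
    Monoid (WreathProduct S T) where
  mul x y := (fun t => x.1 t * y.1 (t * x.2), x.2 * y.2)
  one := (fun _ => 1, 1)
  mul_assoc x y z := by
    refine Prod.ext (funext fun t => ?_) (mul_assoc _ _ _)
    show x.1 t * y.1 (t * x.2) * z.1 (t * (x.2 * y.2)) =
      x.1 t * (y.1 (t * x.2) * z.1 (t * x.2 * y.2))
    rw [mul_assoc, mul_assoc]
  one_mul x := by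
    refine Prod.ext (funext fun t => ?_) (one_mul _)
    show 1 * x.1 (t * 1) = x.1 t
    rw [one_mul, mul_one]
  mul_one x := by
    refine Prod.ext (funext fun t => ?_) (mul_one _)
    show x.1 t * 1 = x.1 t
    rw [mul_one]

/-- For monoids `A`, `B`, `C`, the map
`ψ : (A ≀ B) × C → A ≀ (B × C)`, `((f, b), c) ↦ (fα, (b, c))` where
`(b₀, c₀)(fα) = b₀ f`, is an injective monoid homomorphism; in particular
`(A ≀ B) × C` embeds in `A ≀ (B × C)`. -/
theorem wreath_prod_absorb (A B C : Type*) [Monoid A] [Monoid B] [Monoid C] :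
    ∃ ψ : (WreathProduct A B) × C →* WreathProduct A (B × C),
      Function.Injective ψ ∧
        ∀ (f : B → A) (b : B) (c : C),
          ψ ((f, b), c) = ((fun p : B × C => f p.1), (b, c)) := by
  refine ⟨{ toFun := fun x => ((fun p : B × C => x.1.1 p.1), (x.1.2, x.2))
            map_one' := rfl
            map_mul' := fun _ _ => rfl }, ?_, fun _ _ _ => rfl⟩
  rintro ⟨⟨f, b⟩, c⟩ ⟨⟨g, b'⟩, c'⟩ h
  have h1 : (fun p : B × C => f p.1) = fun p : B × C => g p.1 := congrArg Prod.fst h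
  have h2 : (b, c) = (b', c') := congrArg Prod.snd h
  have hf : f = g := funext fun t => congrFun h1 (t, 1)
  obtain ⟨hb, hc⟩ := Prod.mk.inj h2
  subst hf hb hc
  rfl
end

section
/- For any monoids S₁, S₂ and S₃, the wreath product (S₃ ≀ S₂) ≀ S₁ is isomorphic to a submonoid of S₃ ≀ (S₂ ≀ S₁). -/
/-- For monoids `S₁`, `S₂`, `S₃`, the wreath product `(S₃ ≀ S₂) ≀ S₁`
is isomorphic to a submonoid of `S₃ ≀ (S₂ ≀ S₁)`, i.e. there is an injective monoid
homomorphism `(S₃ ≀ S₂) ≀ S₁ → S₃ ≀ (S₂ ≀ S₁)`. -/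
theorem wreath_assoc_embed (S₁ S₂ S₃ : Type*) [Monoid S₁] [Monoid S₂] [Monoid S₃] :
    ∃ φ : WreathProduct (WreathProduct S₃ S₂) S₁ →*
        WreathProduct S₃ (WreathProduct S₂ S₁),
      Function.Injective φ := by
  refine ⟨⟨⟨fun x => (fun w => (x.1 w.2).1 (w.1 1), (fun t => (x.1 t).2, x.2)), rfl⟩, ?_⟩, ?_⟩
  · intro x y
    refine Prod.ext (funext fun w => ?_) rfl
    show (x.1 w.2).1 (w.1 1) * (y.1 (w.2 * x.2)).1 (w.1 1 * (x.1 w.2).2) =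
      (x.1 w.2).1 (w.1 1) * (y.1 (w.2 * x.2)).1 (w.1 1 * (x.1 (1 * w.2)).2)
    rw [one_mul]
  · intro x y h
    have h1 := congrArg Prod.fst h
    have h2 := congrArg Prod.snd h
    refine Prod.ext (funext fun t => Prod.ext (funext fun s => ?_) ?_) ?_
    · exact congrFun h1 ((fun _ => s, t) : (S₁ → S₂) × S₁)
    · exact congrFun (congrArg Prod.fst h2) t
    · have h3 := congrArg Prod.snd h2
      exact h3
end

section
/- If A and B are finite aperiodic monoids, then the wreath product A ≀ B is aperiodic. -/
/-- A subsemigroup of a monoid which is a group under the induced operation. -/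
def IsGroupSubsemigroup {M : Type*} [Monoid M] (S : Subsemigroup M) : Prop :=
  ∃ e ∈ S, (∀ x ∈ S, e * x = x ∧ x * e = x) ∧ ∀ x ∈ S, ∃ y ∈ S, x * y = e ∧ y * x = e

/-- A monoid is aperiodic if all of its subgroups (subsemigroups which are groups
under the induced operation) are trivial. -/
def IsAperiodic (M : Type*) [Monoid M] : Prop :=
  ∀ S : Subsemigroup M, IsGroupSubsemigroup S → ∀ a ∈ S, ∀ b ∈ S, a = b

theorem const_of_mul_on {M N : Type*} [Monoid M] [Monoid N] (hN : IsAperiodic N)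
    (S : Subsemigroup M) (hS : IsGroupSubsemigroup S) (φ : M → N)
    (hφ : ∀ x ∈ S, ∀ y ∈ S, φ (x * y) = φ x * φ y) :
    ∀ x ∈ S, ∀ y ∈ S, φ x = φ y := by
  obtain ⟨e, he, h1, h2⟩ := hS
  let T : Subsemigroup N :=
    { carrier := {n | ∃ x ∈ S, φ x = n}
      mul_mem' := by
        rintro _ _ ⟨x, hx, rfl⟩ ⟨y, hy, rfl⟩
        exact ⟨x * y, S.mul_mem hx hy, hφ x hx y hy⟩ }
  have hT : IsGroupSubsemigroup T := by
    refine ⟨φ e, ⟨e, he, rfl⟩, ?_, ?_⟩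
    · rintro _ ⟨x, hx, rfl⟩
      rw [← hφ e he x hx, ← hφ x hx e he, (h1 x hx).1, (h1 x hx).2]
      exact ⟨rfl, rfl⟩
    · rintro _ ⟨x, hx, rfl⟩
      obtain ⟨y, hy, hxy, hyx⟩ := h2 x hx
      refine ⟨φ y, ⟨y, hy, rfl⟩, ?_⟩
      rw [← hφ x hx y hy, ← hφ y hy x hx, hxy, hyx]
      exact ⟨rfl, rfl⟩
  intro x hx y hy
  exact hN T hT _ ⟨x, hx, rfl⟩ _ ⟨y, hy, rfl⟩

/-- If `A` and `B` are finite aperiodic monoids, then the wreath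
product `A ≀ B` is aperiodic. -/
theorem wreath_aperiodic (A B : Type*) [Monoid A] [Monoid B] [Finite A] [Finite B]
    (hA : IsAperiodic A) (hB : IsAperiodic B) :
    IsAperiodic (WreathProduct A B) := by
  intro S hS
  have hsnd : ∀ x ∈ S, ∀ y ∈ S, x.2 = y.2 :=
    const_of_mul_on hB S hS (fun x => x.2) (fun _ _ _ _ => rfl)
  have hS' := hS
  obtain ⟨e, he, h1, -⟩ := hS'
  have hidem : e.2 * e.2 = e.2 := hsnd (e * e) (S.mul_mem he he) e he
  have hfst : ∀ t : B, ∀ x ∈ S, ∀ y ∈ S, x.1 (t * e.2) = y.1 (t * e.2) := by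
    intro t
    refine const_of_mul_on hA S hS (fun x => x.1 (t * e.2)) ?_
    intro x hx y hy
    show x.1 (t * e.2) * y.1 (t * e.2 * x.2) = x.1 (t * e.2) * y.1 (t * e.2)
    rw [hsnd x hx e he, mul_assoc, hidem]
  intro x hx y hy
  refine Prod.ext (funext fun t => ?_) (hsnd x hx y hy)
  have ex : e.1 t * x.1 (t * e.2) = x.1 t := congrArg (fun z => z.1 t) (h1 x hx).1
  have ey : e.1 t * y.1 (t * e.2) = y.1 t := congrArg (fun z => z.1 t) (h1 y hy).1
  rw [← ex, ← ey, hfst t x hx y hy]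
end

section
/- For a field k and n a positive integer, AS_n(k) divides (k^n)̃ ≀ AS*_n(k), where (k^n)̃ is the monoid consisting of the identity map and all constant maps on k^n. -/
/-- A monoid `S` divides a monoid `T`, written `S ≺ T`, if `S` is a homomorphic image
of a submonoid of `T`. -/
def MonoidDivides (S T : Type*) [Monoid S] [Monoid T] : Prop :=
  ∃ (U : Submonoid T) (φ : U →* S), Function.Surjective φ

/-- The monoid of all transformations of `X`, with functions applied on the right:
`x (f * g) = (x f) g`, i.e. `f * g = g ∘ f`. -/
def RTrans (X : Type*) : Type _ := X → X

instance RTrans.instMonoid (X : Type*) : Monoid (RTrans X) where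
  mul f g := fun x => g (f x)
  one := fun x => x
  mul_assoc _ _ _ := rfl
  one_mul _ := rfl
  mul_one _ := rfl

/-- The affine scaling monoid `AS_m(R)`: all maps `v ↦ vλ + c` on row vectors `v ∈ R^m`
(where `vλ` is the row vector `v` multiplied by the scaling matrix `λI`),
under composition (functions applied on the right). -/
def affineScaling (m : ℕ) (R : Type*) [Semiring R] : Submonoid (RTrans (Fin m → R)) where
  carrier := {f | ∃ (a : R) (c : Fin m → R), f = fun v => fun i => v i * a + c i}
  one_mem' := ⟨1, 0, by funext v i; simp; rfl⟩
  mul_mem' := by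
    rintro f g ⟨a, c, rfl⟩ ⟨b, d, rfl⟩
    refine ⟨a * b, fun i => c i * b + d i, ?_⟩
    funext v i
    show ((fun v : Fin m → R => fun i => v i * a + c i) v i) * b + d i = _
    simp [add_mul, mul_assoc, add_assoc]

/-- `X̃`: the monoid consisting of the identity map together with all constant maps
on `X`, under composition. -/
def tildeMonoid (X : Type*) : Submonoid (RTrans X) where
  carrier := {f | f = 1 ∨ ∃ c : X, f = fun _ => c}
  one_mem' := Or.inl rfl
  mul_mem' := by
    rintro f g hf (rfl | ⟨d, rfl⟩)
    · rcases hf with rfl | ⟨c, rfl⟩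
      · exact Or.inl (one_mul 1)
      · exact Or.inr ⟨c, rfl⟩
    · exact Or.inr ⟨d, rfl⟩

/-- `AS*_m(k)`: the group of units of the affine scaling monoid `AS_m(k)`, i.e. all maps
`v ↦ vλ + c` with `λ ≠ 0`, realized as a submonoid of the transformation monoid. -/
def affineScalingStar (m : ℕ) (k : Type*) [Field k] : Submonoid (RTrans (Fin m → k)) where
  carrier := {f | ∃ (a : k) (c : Fin m → k), a ≠ 0 ∧ f = fun v => fun i => v i * a + c i}
  one_mem' := ⟨1, 0, one_ne_zero, by funext v i; simp; rfl⟩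
  mul_mem' := by
    rintro f g ⟨a, c, ha, rfl⟩ ⟨b, d, hb, rfl⟩
    refine ⟨a * b, fun i => c i * b + d i, mul_ne_zero ha hb, ?_⟩
    funext v i
    show ((fun v : Fin m → k => fun i => v i * a + c i) v i) * b + d i = _
    simp [add_mul, mul_assoc, add_assoc]

/-- For a field `k` and a positive integer `n`, the affine scaling
monoid `AS_n(k)` divides `(k^n)̃ ≀ AS*_n(k)`. -/
theorem affineScaling_divides (n : ℕ) (hn : 0 < n) (k : Type*) [Field k] :
    MonoidDivides ↥(affineScaling n k)
      (WreathProduct ↥(tildeMonoid (Fin n → k)) ↥(affineScalingStar n k)) := by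
  classical
  let U : Submonoid (WreathProduct ↥(tildeMonoid (Fin n → k)) ↥(affineScalingStar n k)) :=
    { carrier := {w | ∃ s : ↥(affineScaling n k), ∀ (t : ↥(affineScalingStar n k))
        (x : Fin n → k), w.2.1 (t.1 ((w.1 t).1 x)) = s.1 (t.1 x)}
      one_mem' := ⟨1, fun t x => rfl⟩
      mul_mem' := by
        rintro w w' ⟨s, hs⟩ ⟨s', hs'⟩
        refine ⟨s * s', fun t x => ?_⟩
        have h1 := hs' (t * w.2) ((w.1 t).1 x)
        have h2 := hs t x
        show w'.2.1 (w.2.1 (t.1 ((w'.1 (t * w.2)).1 ((w.1 t).1 x)))) = s'.1 (s.1 (t.1 x))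
        rw [← h2]
        exact h1 }
  have huniq : ∀ (w : WreathProduct ↥(tildeMonoid (Fin n → k)) ↥(affineScalingStar n k))
      (s s' : ↥(affineScaling n k)),
      (∀ (t : ↥(affineScalingStar n k)) (x : Fin n → k),
        w.2.1 (t.1 ((w.1 t).1 x)) = s.1 (t.1 x)) →
      (∀ (t : ↥(affineScalingStar n k)) (x : Fin n → k),
        w.2.1 (t.1 ((w.1 t).1 x)) = s'.1 (t.1 x)) → s = s' := by
    intro w s s' h h'
    apply Subtype.ext
    funext x
    exact (h 1 x).symm.trans (h' 1 x)
  let φ : U →* ↥(affineScaling n k) :=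
    { toFun := fun u => Classical.choose u.2
      map_one' := huniq 1 _ _ (Classical.choose_spec (1 : U).2) (fun t x => rfl)
      map_mul' := by
        intro u v
        refine huniq (u * v).1 _ _ (Classical.choose_spec (u * v).2) (fun t x => ?_)
        have h1 := Classical.choose_spec v.2 (t * u.1.2) ((u.1.1 t).1 x)
        have h2 := Classical.choose_spec u.2 t x
        exact h1.trans (congrArg (Classical.choose v.2).1 h2) }
  refine ⟨U, φ, fun s => ?_⟩
  suffices h : ∃ w : WreathProduct ↥(tildeMonoid (Fin n → k)) ↥(affineScalingStar n k),
      ∀ (t : ↥(affineScalingStar n k)) (x : Fin n → k),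
        w.2.1 (t.1 ((w.1 t).1 x)) = s.1 (t.1 x) by
    obtain ⟨w, hw⟩ := h
    exact ⟨⟨w, s, hw⟩, huniq w _ _ (Classical.choose_spec (⟨s, hw⟩ : w ∈ U)) hw⟩
  obtain ⟨s, a, c, rfl⟩ := s
  by_cases ha : a = 0
  · have hsurj : ∀ t : ↥(affineScalingStar n k), ∃ y : Fin n → k, t.1 y = c := by
      rintro ⟨t, b, d, hb, rfl⟩
      refine ⟨fun i => (c i - d i) * b⁻¹, ?_⟩
      funext i
      show (c i - d i) * b⁻¹ * b + d i = c i
      field_simp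
      ring
    choose y hy using hsurj
    refine ⟨(fun t => ⟨fun _ => y t, Or.inr ⟨y t, rfl⟩⟩, 1), fun t x => ?_⟩
    refine (hy t).trans ?_
    funext i
    show c i = t.1 x i * a + c i
    simp [ha]
  · exact ⟨(fun _ => 1, ⟨_, a, c, ha, rfl⟩), fun t x => rfl⟩
end
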